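/- arXiv:1906.02855 — 11 statements merged into one kernel-verified Lean document; each statement's English description precedes it below -/
import Mathlib

section
/- Let 𝒢 be a groupoid, G a group with identity e, P ⊆ G a submonoid, and c a G-valued cocycle on 𝒢. Then the following are equivalent: (a) for all p, q ∈ P, r(𝒢_p) ∩ r(𝒢_q) ⊆ ⋃_{m ∈ pP ∩ qP} r(𝒢_m); (b) for every odd n ≥ 1 and all p, p₁, …, p_n ∈ P, r(𝒢_p) ∩ r(𝒢_{p₁}𝒢_{p₂}⁻¹⋯𝒢_{p_{n−1}}⁻¹𝒢_{p_n}) ⊆ ⋃_{m ∈ pP ∩ (p₁p₂⁻¹⋯p_{n−1}⁻¹p_n)P} r(𝒢_m). -/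
/-!
Condition (a) is the case `n = 1` of (b). The converse is by induction on the length of the
zigzag. For a zigzag `γ₁, …, γₙ` with `n ≥ 3`, the object `r(γ₂) = r(γ₃)` lies in `r(𝒢_{p₂})` and
in the range of the shorter zigzag `γ₃, …, γₙ`, so by induction it is the range of some `μ` with
`c(μ) = p₂ h = (p₃ p₄⁻¹ ⋯ pₙ) h'`, where `h, h' ∈ P`. Then `γ₁ γ₂⁻¹ μ` has the same range as `γ₁`
and its cocycle value `p₁ h = (p₁ p₂⁻¹ ⋯ pₙ) h'` lies in `P`; applying (a) to `p` and `p₁ h`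
finishes the step.
-/

open CategoryTheory

/-- The set of objects that are the range (codomain) of some morphism with cocycle value `g`. -/
def rangeFiber {Obj : Type*} [Groupoid Obj] {G : Type*}
    (c : ∀ a b : Obj, (a ⟶ b) → G) (g : G) : Set Obj :=
  {u | ∃ (a : Obj) (γ : a ⟶ u), c a u γ = g}

/-- The right translate `gP` of a submonoid `P` by `g`. -/
def rightTranslate {G : Type*} [Group G] (P : Submonoid G) (g : G) : Set G :=
  {m | ∃ h ∈ P, m = g * h}

/-- The alternating product `p₁ p₂⁻¹ p₃ ⋯` (indices taken `0`-based). -/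
def altProd {G : Type*} [Group G] {n : ℕ} (ps : Fin n → G) : G :=
  (List.ofFn fun i : Fin n => if (i : ℕ) % 2 = 0 then ps i else (ps i)⁻¹).prod

/-- Splitting off the first two factors `p₁ p₂⁻¹` of an alternating product. -/
lemma altProd_succ_succ {G : Type*} [Group G] {n : ℕ} (ps : Fin (n + 2) → G) :
    altProd ps = ps 0 * (ps 1)⁻¹ * altProd (fun i : Fin n => ps i.succ.succ) := by
  have h : ∀ i : ℕ, (i + 1 + 1) % 2 = i % 2 := fun i => by omega
  simp [altProd, List.ofFn_succ, mul_assoc, h]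

/-- If `γ` and `δ` have a common source, then `γ δ⁻¹` carries a range value `m` at `r(δ)` to the
value `c(γ) c(δ)⁻¹ m` at `r(γ)`. The identifications of objects are kept as hypotheses, since in a
zigzag they are propositional equalities. -/
lemma rangeFiber_transport {Obj : Type*} [Groupoid Obj] {G : Type*} [Group G]
    (c : ∀ a b : Obj, (a ⟶ b) → G)
    (hc : ∀ (a b d : Obj) (f : a ⟶ b) (g : b ⟶ d), c a d (f ≫ g) = c b d g * c a b f)
    {s s' u v v' : Obj} (γ : s ⟶ u) (δ : s' ⟶ v) (hs : s = s') (hv : v = v') {m : G}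
    (hm : v' ∈ rangeFiber c m) : u ∈ rangeFiber c (c s u γ * (c s' v δ)⁻¹ * m) := by
  subst hs hv
  obtain ⟨a, μ, rfl⟩ := hm
  refine ⟨a, μ ≫ Groupoid.inv δ ≫ γ, ?_⟩
  have h := hc _ _ _ δ (Groupoid.inv δ ≫ γ)
  rw [← Category.assoc, Groupoid.comp_inv, Category.id_comp] at h
  rw [hc, eq_mul_inv_of_mul_eq h.symm]

theorem stmt0 {Obj : Type*} [Groupoid Obj] {G : Type*} [Group G] (P : Submonoid G)
    (c : ∀ a b : Obj, (a ⟶ b) → G)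
    (hc : ∀ (a b d : Obj) (f : a ⟶ b) (g : b ⟶ d), c a d (f ≫ g) = c b d g * c a b f) :
    (∀ p ∈ P, ∀ q ∈ P,
        rangeFiber c p ∩ rangeFiber c q ⊆
          ⋃ m ∈ rightTranslate P p ∩ rightTranslate P q, rangeFiber c m)
    ↔
    (∀ (k : ℕ) (p : G), p ∈ P → ∀ ps : Fin (2 * k + 1) → G, (∀ i, ps i ∈ P) →
        rangeFiber c p ∩
          {u : Obj | ∃ (ss rr : Fin (2 * k + 1) → Obj) (γ : ∀ i, ss i ⟶ rr i),
            (∀ i, c (ss i) (rr i) (γ i) = ps i) ∧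
            (∀ (i : ℕ) (h : i + 1 < 2 * k + 1), i % 2 = 0 →
              ss ⟨i, by omega⟩ = ss ⟨i + 1, h⟩) ∧
            (∀ (i : ℕ) (h : i + 1 < 2 * k + 1), i % 2 = 1 →
              rr ⟨i, by omega⟩ = rr ⟨i + 1, h⟩) ∧
            u = rr ⟨0, by omega⟩} ⊆
          ⋃ m ∈ rightTranslate P p ∩ rightTranslate P (altProd ps), rangeFiber c m) := by
  constructor
  · intro ha k
    induction k with
    | zero =>
      rintro p hp ps hps u ⟨hu, ss, rr, γ, hγ, -, -, rfl⟩
      have h0 : altProd ps = ps 0 := by simp [altProd]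
      rw [h0]
      exact ha p hp _ (hps 0) ⟨hu, _, γ 0, hγ 0⟩
    | succ k ih =>
      rintro p hp ps hps u ⟨hu, ss, rr, γ, hγ, hs, hr, rfl⟩
      have hr' : rr 1 = rr (Fin.succ (Fin.succ 0)) := hr 1 (by omega) rfl
      have hγ' : rr 1 ∈ rangeFiber c (ps 1) := ⟨_, γ 1, hγ 1⟩
      -- The induction hypothesis at `r(γ₂) = r(γ₃)`, for `p₂` and the tail of the zigzag.
      have key := @ih (ps 1) (hps 1) (fun i => ps i.succ.succ) (fun i => hps _)
        (rr (Fin.succ (Fin.succ 0)))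
        ⟨hr' ▸ hγ', fun i => ss i.succ.succ,
          fun i => rr i.succ.succ, fun i => γ i.succ.succ, fun i => hγ _,
          fun i h hi => hs (i + 2) (by omega) (by omega),
          fun i h hi => hr (i + 2) (by omega) (by omega), rfl⟩
      simp only [Set.mem_iUnion] at key
      obtain ⟨m, ⟨⟨h, hh, hm⟩, ⟨h', hh', hm'⟩⟩, hmr⟩ := key
      have ht := rangeFiber_transport c hc (γ 0) (γ 1) (hs 0 (by omega) rfl)
        hr' hmr
      rw [hγ, hγ] at ht
      have e1 : ps 0 * (ps 1)⁻¹ * m = ps 0 * h := by rw [hm]; group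
      have e2 : ps 0 * h = altProd ps * h' := by
        rw [← e1, hm', altProd_succ_succ (n := 2 * k + 1) ps, mul_assoc, mul_assoc, mul_assoc]
      rw [e1] at ht
      have hf := ha p hp _ (P.mul_mem (hps 0) hh) ⟨hu, ht⟩
      simp only [Set.mem_iUnion] at hf ⊢
      obtain ⟨m₂, ⟨hp₂, ⟨g, hg, hm₂⟩⟩, hr₂⟩ := hf
      exact ⟨m₂, ⟨hp₂, h' * g, P.mul_mem hh' hg, by rw [hm₂, e2, mul_assoc]⟩, hr₂⟩
  · rintro hb p hp q hq u ⟨hu, a, γ, hγ⟩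
    have h := @hb 0 p hp (fun _ => q) (fun _ => hq) u
      ⟨hu, fun _ => a, fun _ => u, fun _ => γ, fun _ => hγ, fun _ _ _ => rfl,
        fun _ _ _ => rfl, rfl⟩
    simpa [altProd] using h
end

section
/- Let (G,P) be a quasi-lattice ordered group, 𝒢 a groupoid, and c a G-valued cocycle on 𝒢 satisfying the extendibility condition: for all p, q ∈ P, if p and q have a common upper bound in P then r(𝒢_p) ∩ r(𝒢_q) = r(𝒢_{p∨q}), and otherwise r(𝒢_p) ∩ r(𝒢_q) = ∅. Then for any morphisms μ, ν of 𝒢 with c(μ) ∈ P, c(ν) ∈ P, and r(μ) = r(ν), there exist morphisms ρ, τ with c(ρ) ∈ P, c(τ) ∈ P, s(ρ) = s(τ), and ν⁻¹μ = ρτ⁻¹. -/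
/-!
The common range `u` of `μ` and `ν` lies in both range fibers, over `p = c μ` and over `q = c ν`.
The second half of the extendibility condition therefore forces `p` and `q` to have a common upper
bound, hence a least one `j = p ∨ q`, and the first half gives a morphism `ξ` into `u` with
`c ξ = j`. Since `p ≤ j` and `q ≤ j`, the morphisms `ρ = ν⁻¹ξ` and `τ = μ⁻¹ξ` have cocycle values
`q⁻¹j` and `p⁻¹j` in `P`, and `ρτ⁻¹ = ν⁻¹ξξ⁻¹μ = ν⁻¹μ`.
-/

open CategoryTheory

/-- The left-invariant order induced by a submonoid: `x ≤ y` iff `x⁻¹ * y ∈ P`. -/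
def qleP {G : Type*} [Group G] (P : Submonoid G) (x y : G) : Prop := x⁻¹ * y ∈ P

/-- `p` and `q` have a common upper bound in `P`. -/
def HasCUB {G : Type*} [Group G] (P : Submonoid G) (p q : G) : Prop :=
  ∃ u, u ∈ P ∧ qleP P p u ∧ qleP P q u

/-- `j` is a least common upper bound of `p` and `q` in `P`. -/
def IsLCUB {G : Type*} [Group G] (P : Submonoid G) (p q j : G) : Prop :=
  j ∈ P ∧ qleP P p j ∧ qleP P q j ∧
    ∀ u, u ∈ P → qleP P p u → qleP P q u → qleP P j u

/-- `(G, P)` is a quasi-lattice ordered group. -/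
def IsQLO {G : Type*} [Group G] (P : Submonoid G) : Prop :=
  (∀ g : G, g ∈ P → g⁻¹ ∈ P → g = 1) ∧
    ∀ p q : G, HasCUB P p q → ∃ j, IsLCUB P p q j

/-- Left division in the groupoid becomes left division of cocycle values. -/
theorem cocycle_comp_inv {Obj : Type*} [Groupoid Obj] {G : Type*} [Group G]
    (c : ∀ a b : Obj, (a ⟶ b) → G)
    (hc : ∀ (a b d : Obj) (f : a ⟶ b) (g : b ⟶ d), c a d (f ≫ g) = c b d g * c a b f)
    {x a u : Obj} (ξ : x ⟶ u) (μ : a ⟶ u) :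
    c x a (ξ ≫ Groupoid.inv μ) = (c a u μ)⁻¹ * c x u ξ := by
  have h := hc x a u (ξ ≫ Groupoid.inv μ) μ
  rw [Category.assoc, Groupoid.inv_comp, Category.comp_id] at h
  rw [h, inv_mul_cancel_left]

theorem stmt1 {Obj : Type*} [Groupoid Obj] {G : Type*} [Group G] (P : Submonoid G)
    (hQ : IsQLO P)
    (c : ∀ a b : Obj, (a ⟶ b) → G)
    (hc : ∀ (a b d : Obj) (f : a ⟶ b) (g : b ⟶ d), c a d (f ≫ g) = c b d g * c a b f)
    (hext : ∀ p ∈ P, ∀ q ∈ P,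
      (∀ j : G, IsLCUB P p q j →
        rangeFiber c p ∩ rangeFiber c q = rangeFiber c j) ∧
      (¬ HasCUB P p q → rangeFiber c p ∩ rangeFiber c q = (∅ : Set Obj)))
    {a b u : Obj} (μ : a ⟶ u) (ν : b ⟶ u)
    (hμ : c a u μ ∈ P) (hν : c b u ν ∈ P) :
    ∃ (x : Obj) (ρ : x ⟶ b) (τ : x ⟶ a),
      c x b ρ ∈ P ∧ c x a τ ∈ P ∧
        μ ≫ Groupoid.inv ν = Groupoid.inv τ ≫ ρ := by
  have hu : u ∈ rangeFiber c (c a u μ) ∩ rangeFiber c (c b u ν) :=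
    ⟨⟨a, μ, rfl⟩, ⟨b, ν, rfl⟩⟩
  obtain ⟨hjoin, hempty⟩ := hext _ hμ _ hν
  have hcub : HasCUB P (c a u μ) (c b u ν) := by
    by_contra h
    rw [hempty h] at hu
    exact hu
  obtain ⟨j, hj⟩ := hQ.2 _ _ hcub
  rw [hjoin j hj] at hu
  obtain ⟨x, ξ, rfl⟩ := hu
  refine ⟨x, ξ ≫ Groupoid.inv ν, ξ ≫ Groupoid.inv μ, ?_, ?_, ?_⟩
  · rw [cocycle_comp_inv c hc]
    exact hj.2.2.1
  · rw [cocycle_comp_inv c hc]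
    exact hj.2.1
  · simp [Groupoid.inv_eq_inv]
end

section
/- Let (G,P) be a quasi-lattice ordered group, 𝒢 a groupoid, and c a G-valued cocycle on 𝒢 satisfying the extendibility condition: for all p, q ∈ P, if p and q have a common upper bound in P then r(𝒢_p) ∩ r(𝒢_q) = r(𝒢_{p∨q}), and otherwise r(𝒢_p) ∩ r(𝒢_q) = ∅. Then the following are equivalent: (a) every morphism of 𝒢 lies in the subgroupoid generated by c⁻¹(P) (the smallest collection of morphisms containing all morphisms with cocycle value in P and all identity morphisms, and closed under inversion and under composition whenever defined); (b) for every morphism γ of 𝒢 there exist morphisms μ, ν with c(μ) ∈ P, c(ν) ∈ P, s(μ) = s(ν), and γ = μν⁻¹. -/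
/-!
That (b) implies (a) is immediate. Conversely, the morphisms of the form `μν⁻¹` with `c(μ), c(ν) ∈ P`
contain `c⁻¹(P)` and the identities and are closed under inversion, so the only point is closure
under composition: in a product `μ₁ν₁⁻¹μ₂ν₂⁻¹` the middle factor `ν₁⁻¹μ₂` has to be rewritten
as `αβ⁻¹` with `c(α), c(β) ∈ P`. This is `exists_comp_eq_comp`: the morphisms `ν₁` and `μ₂` have a
common range, so extendibility provides a morphism `η` with that range and `c(η) = c(ν₁) ∨ c(μ₂)`;
then `α = ν₁⁻¹η` and `β = μ₂⁻¹η` work.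
-/

open CategoryTheory

/-- The subgroupoid generated by a family of morphisms: the smallest collection containing
the given morphisms and all identities, closed under inversion and composition. -/
inductive GenBy {Obj : Type*} [Groupoid Obj] (S : ∀ a b : Obj, Set (a ⟶ b)) :
    ∀ a b : Obj, (a ⟶ b) → Prop
  | base {a b : Obj} (f : a ⟶ b) : f ∈ S a b → GenBy S a b f
  | id (a : Obj) : GenBy S a a (𝟙 a)
  | inv {a b : Obj} (f : a ⟶ b) : GenBy S a b f → GenBy S b a (Groupoid.inv f)
  | comp {a b d : Obj} (f : a ⟶ b) (g : b ⟶ d) :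
      GenBy S a b f → GenBy S b d g → GenBy S a d (f ≫ g)

theorem cocycle_id {Obj : Type*} [Groupoid Obj] {G : Type*} [Group G]
    (c : ∀ a b : Obj, (a ⟶ b) → G)
    (hc : ∀ (a b d : Obj) (f : a ⟶ b) (g : b ⟶ d), c a d (f ≫ g) = c b d g * c a b f)
    (a : Obj) : c a a (𝟙 a) = 1 := by
  have h := hc a a a (𝟙 a) (𝟙 a)
  rw [Category.comp_id] at h
  exact left_eq_mul.mp h

theorem cocycle_inv {Obj : Type*} [Groupoid Obj] {G : Type*} [Group G]
    (c : ∀ a b : Obj, (a ⟶ b) → G)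
    (hc : ∀ (a b d : Obj) (f : a ⟶ b) (g : b ⟶ d), c a d (f ≫ g) = c b d g * c a b f)
    {a b : Obj} (f : a ⟶ b) : c b a (Groupoid.inv f) = (c a b f)⁻¹ := by
  have h := hc a b a f (Groupoid.inv f)
  rw [Groupoid.comp_inv, cocycle_id c hc] at h
  exact eq_inv_of_mul_eq_one_left h.symm

/-- Two morphisms with common range and cocycle values in `P` can be completed to a commutative
square by morphisms with cocycle values in `P`. -/
theorem exists_comp_eq_comp {Obj : Type*} [Groupoid Obj] {G : Type*} [Group G] (P : Submonoid G)
    (hQ : IsQLO P)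
    (c : ∀ a b : Obj, (a ⟶ b) → G)
    (hc : ∀ (a b d : Obj) (f : a ⟶ b) (g : b ⟶ d), c a d (f ≫ g) = c b d g * c a b f)
    (hext : ∀ p ∈ P, ∀ q ∈ P,
      (∀ j : G, IsLCUB P p q j →
        rangeFiber c p ∩ rangeFiber c q = rangeFiber c j) ∧
      (¬ HasCUB P p q → rangeFiber c p ∩ rangeFiber c q = (∅ : Set Obj)))
    {x y b : Obj} (f : x ⟶ b) (g : y ⟶ b) (hf : c x b f ∈ P) (hg : c y b g ∈ P) :
    ∃ (z : Obj) (α : z ⟶ x) (β : z ⟶ y), c z x α ∈ P ∧ c z y β ∈ P ∧ α ≫ f = β ≫ g := by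
  obtain ⟨hlub, hdisj⟩ := hext _ hf _ hg
  have hb : b ∈ rangeFiber c (c x b f) ∩ rangeFiber c (c y b g) := ⟨⟨x, f, rfl⟩, ⟨y, g, rfl⟩⟩
  have hcub : HasCUB P (c x b f) (c y b g) := by
    by_contra h
    rw [hdisj h] at hb
    exact hb
  obtain ⟨j, hj⟩ := hQ.2 _ _ hcub
  rw [hlub j hj] at hb
  obtain ⟨z, η, hη⟩ := hb
  refine ⟨z, η ≫ Groupoid.inv f, η ≫ Groupoid.inv g, ?_, ?_, by simp⟩
  · rw [hc, cocycle_inv c hc, hη]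
    exact hj.2.1
  · rw [hc, cocycle_inv c hc, hη]
    exact hj.2.2.1

theorem stmt2 {Obj : Type*} [Groupoid Obj] {G : Type*} [Group G] (P : Submonoid G)
    (hQ : IsQLO P)
    (c : ∀ a b : Obj, (a ⟶ b) → G)
    (hc : ∀ (a b d : Obj) (f : a ⟶ b) (g : b ⟶ d), c a d (f ≫ g) = c b d g * c a b f)
    (hext : ∀ p ∈ P, ∀ q ∈ P,
      (∀ j : G, IsLCUB P p q j →
        rangeFiber c p ∩ rangeFiber c q = rangeFiber c j) ∧
      (¬ HasCUB P p q → rangeFiber c p ∩ rangeFiber c q = (∅ : Set Obj))) :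
    (∀ (a b : Obj) (γ : a ⟶ b), GenBy (fun a b => {f : a ⟶ b | c a b f ∈ P}) a b γ)
    ↔
    (∀ (a b : Obj) (γ : a ⟶ b), ∃ (x : Obj) (μ : x ⟶ b) (ν : x ⟶ a),
      c x b μ ∈ P ∧ c x a ν ∈ P ∧ γ = Groupoid.inv ν ≫ μ) := by
  constructor
  · intro h a b γ
    induction h a b γ with
    | @base a b f hf =>
      exact ⟨a, f, 𝟙 a, hf, by rw [cocycle_id c hc]; exact P.one_mem, by simp⟩
    | id a =>
      have h1 : c a a (𝟙 a) ∈ P := by rw [cocycle_id c hc]; exact P.one_mem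
      exact ⟨a, 𝟙 a, 𝟙 a, h1, h1, by simp⟩
    | inv f _ ih =>
      obtain ⟨x, μ, ν, hμ, hν, rfl⟩ := ih
      exact ⟨x, ν, μ, hν, hμ, by simp⟩
    | comp f g _ _ ihf ihg =>
      obtain ⟨x, μ₁, ν₁, hμ₁, hν₁, rfl⟩ := ihf
      obtain ⟨y, μ₂, ν₂, hμ₂, hν₂, rfl⟩ := ihg
      obtain ⟨z, α, β, hα, hβ, hsq⟩ := exists_comp_eq_comp P hQ c hc hext μ₁ ν₂ hμ₁ hν₂
      refine ⟨z, β ≫ μ₂, α ≫ ν₁, ?_, ?_, ?_⟩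
      · rw [hc]; exact P.mul_mem hμ₂ hβ
      · rw [hc]; exact P.mul_mem hν₁ hα
      · have hμ : μ₁ = inv α ≫ β ≫ ν₂ := by rw [← hsq]; simp
        simp [hμ]
  · intro h a b γ
    obtain ⟨x, μ, ν, hμ, hν, rfl⟩ := h a b γ
    exact .comp _ _ (.inv _ (.base _ hν)) (.base _ hμ)
end

section
/- Let (x,y), (u,v) ∈ P = ℕ ⋊ ℕ₊*. Then (x,y) and (u,v) have a common upper bound in P (with respect to the order g ≤ h iff g⁻¹h ∈ P) if and only if (x + yℕ) ∩ (u + vℕ) ≠ ∅; and in that case, writing a = min((x + yℕ) ∩ (u + vℕ)) and b = min(yℕ₊ ∩ vℕ₊), the element (a, b) belongs to P, satisfies (x,y) ≤ (a,b) and (u,v) ≤ (a,b), and satisfies (a,b) ≤ (s,t) for every (s,t) ∈ P with (x,y) ≤ (s,t) and (u,v) ≤ (s,t). -/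
/-!
For `y > 0`, the relation `(x, y) ≤ (s, t)` says exactly that `s ∈ x + yℕ` and `t ∈ yℕ₊`
(`Qle_iff`). Hence the common upper bounds of `(x, y)` and `(u, v)` are the pairs `(s, t)` with
`s ∈ (x + yℕ) ∩ (u + vℕ)` and `t ∈ yℕ₊ ∩ vℕ₊`; the second set always contains `yv`, so only the
first can be empty.

For minimality, `b` is the least common multiple of `y` and `v`, so every common multiple of `y`
and `v` in `ℕ` is a multiple of `b` (`common_multiple`). This applies to `t`, and also to
`s - a`: it is nonnegative because `a` is the minimum, and it is a multiple of both `y` and `v`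
as a difference of elements of `x + yℕ` and of `u + vℕ`.
-/

/-- Multiplication in `ℚ ⋊ ℚ₊*`: `(x,y)(s,t) = (x + ys, yt)`. -/
def Qmul (g h : ℚ × ℚ) : ℚ × ℚ := (g.1 + g.2 * h.1, g.2 * h.2)

/-- Inversion in `ℚ ⋊ ℚ₊*`: `(x,y)⁻¹ = (-x/y, 1/y)`. -/
def Qinv (g : ℚ × ℚ) : ℚ × ℚ := (-g.1 / g.2, 1 / g.2)

/-- Membership in `P = ℕ ⋊ ℕ₊*`: first coordinate a nonnegative integer, second a
positive integer. -/
def inP (g : ℚ × ℚ) : Prop :=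
  (∃ n : ℕ, g.1 = (n : ℚ)) ∧ ∃ n : ℕ, 0 < n ∧ g.2 = (n : ℚ)

/-- The order on `G`: `g ≤ h` iff `g⁻¹h ∈ P`. -/
def Qle (g h : ℚ × ℚ) : Prop := inP (Qmul (Qinv g) h)

theorem Qle_iff {x y s t : ℚ} (hy : 0 < y) :
    Qle (x, y) (s, t) ↔ (∃ k : ℕ, s = x + y * k) ∧ ∃ k : ℕ, 0 < k ∧ t = y * k := by
  have h1 : ∀ k : ℕ, -x / y + 1 / y * s = k ↔ s = x + y * k := by
    intro k
    rw [show -x / y + 1 / y * s = (s - x) / y by ring, div_eq_iff hy.ne']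
    constructor <;> intro h <;> linarith
  have h2 : ∀ k : ℕ, 1 / y * t = k ↔ t = y * k := by
    intro k
    rw [show 1 / y * t = t / y by ring, div_eq_iff hy.ne', mul_comm]
  simp only [Qle, inP, Qmul, Qinv, h1, h2]

/-- The minimum of `yℕ₊ ∩ vℕ₊` is `lcm y v`, so it divides every common multiple, zero included. -/
theorem common_multiple {y v : ℕ} (hy : 0 < y) (hv : 0 < v) {b : ℚ}
    (hb : IsLeast ({r : ℚ | ∃ k : ℕ, 0 < k ∧ r = y * k} ∩
      {r : ℚ | ∃ k : ℕ, 0 < k ∧ r = v * k}) b) {r : ℚ} {k l : ℕ}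
    (hk : r = y * k) (hl : r = v * l) : ∃ m : ℕ, r = b * m := by
  have hpos : 0 < Nat.lcm y v := Nat.lcm_pos hy hv
  have hle : b ≤ (Nat.lcm y v : ℕ) := by
    obtain ⟨p, hp⟩ := Nat.dvd_lcm_left y v
    obtain ⟨q, hq⟩ := Nat.dvd_lcm_right y v
    refine hb.2 ⟨⟨p, Nat.pos_of_ne_zero ?_, by exact_mod_cast hp⟩,
      ⟨q, Nat.pos_of_ne_zero ?_, by exact_mod_cast hq⟩⟩
    · rintro rfl
      omega
    · rintro rfl
      omega
  obtain ⟨⟨p, hp0, hp⟩, ⟨q, -, hq⟩⟩ := hb.1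
  have hpq : y * p = v * q := by exact_mod_cast hp.symm.trans hq
  have hdvd : Nat.lcm y v ∣ y * p := Nat.lcm_dvd ⟨p, rfl⟩ ⟨q, hpq⟩
  have hge : Nat.lcm y v ≤ y * p := Nat.le_of_dvd (Nat.mul_pos hy hp0) hdvd
  have hbl : b = (Nat.lcm y v : ℕ) := by
    refine le_antisymm hle ?_
    rw [hp]
    exact_mod_cast hge
  have hkl : y * k = v * l := by exact_mod_cast hk.symm.trans hl
  obtain ⟨m, hm⟩ : Nat.lcm y v ∣ y * k := Nat.lcm_dvd ⟨k, rfl⟩ ⟨l, hkl⟩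
  refine ⟨m, ?_⟩
  rw [hk, hbl]
  exact_mod_cast hm

theorem sub_mem_multiples {x y a s : ℚ} (hy : 0 < y) {k l : ℕ} (ha : a = x + y * k)
    (hs : s = x + y * l) (has : a ≤ s) : ∃ m : ℕ, s - a = y * m := by
  have hkl : k ≤ l := by
    have : (k : ℚ) ≤ l := le_of_mul_le_mul_left (by linarith) hy
    exact_mod_cast this
  refine ⟨l - k, ?_⟩
  rw [Nat.cast_sub hkl, ha, hs]
  ring

theorem stmt3 (x y u v : ℚ) (hxy : inP (x, y)) (huv : inP (u, v)) :
    ((∃ g : ℚ × ℚ, inP g ∧ Qle (x, y) g ∧ Qle (u, v) g) ↔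
      ({r : ℚ | ∃ k : ℕ, r = x + y * k} ∩ {r : ℚ | ∃ k : ℕ, r = u + v * k}).Nonempty) ∧
    ∀ a b : ℚ,
      IsLeast ({r : ℚ | ∃ k : ℕ, r = x + y * k} ∩ {r : ℚ | ∃ k : ℕ, r = u + v * k}) a →
      IsLeast ({r : ℚ | ∃ k : ℕ, 0 < k ∧ r = y * k} ∩
        {r : ℚ | ∃ k : ℕ, 0 < k ∧ r = v * k}) b →
      inP (a, b) ∧ Qle (x, y) (a, b) ∧ Qle (u, v) (a, b) ∧
        ∀ s t : ℚ, inP (s, t) → Qle (x, y) (s, t) → Qle (u, v) (s, t) →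
          Qle (a, b) (s, t) := by
  obtain ⟨⟨x, hx⟩, ⟨y, hy, hy'⟩⟩ := hxy
  obtain ⟨⟨u, hu⟩, ⟨v, hv, hv'⟩⟩ := huv
  dsimp only at hx hy' hu hv'
  subst hx hy' hu hv'
  have hyq : (0 : ℚ) < y := by exact_mod_cast hy
  have hvq : (0 : ℚ) < v := by exact_mod_cast hv
  refine ⟨⟨?_, ?_⟩, ?_⟩
  · rintro ⟨⟨s, t⟩, -, h1, h2⟩
    exact ⟨s, ((Qle_iff hyq).1 h1).1, ((Qle_iff hvq).1 h2).1⟩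
  · rintro ⟨s, ⟨k, hk⟩, ⟨l, hl⟩⟩
    refine ⟨(s, y * v), ⟨⟨x + y * k, by push_cast; exact hk⟩,
      ⟨y * v, Nat.mul_pos hy hv, by push_cast; rfl⟩⟩, ?_, ?_⟩
    · exact (Qle_iff hyq).2 ⟨⟨k, hk⟩, ⟨v, hv, rfl⟩⟩
    · exact (Qle_iff hvq).2 ⟨⟨l, hl⟩, ⟨y, hy, mul_comm _ _⟩⟩
  · intro a b ha hb
    obtain ⟨⟨k, hk⟩, ⟨l, hl⟩⟩ := ha.1
    obtain ⟨⟨p, hp0, hp⟩, ⟨q, hq0, hq⟩⟩ := hb.1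
    have hbq : 0 < b := by
      rw [hp]
      exact mul_pos hyq (by exact_mod_cast hp0)
    refine ⟨⟨⟨x + y * k, by push_cast; exact hk⟩,
      ⟨y * p, Nat.mul_pos hy hp0, by push_cast; exact hp⟩⟩,
      (Qle_iff hyq).2 ⟨⟨k, hk⟩, ⟨p, hp0, hp⟩⟩, (Qle_iff hvq).2 ⟨⟨l, hl⟩, ⟨q, hq0, hq⟩⟩, ?_⟩
    intro s t _ h1 h2
    obtain ⟨⟨k', hk'⟩, ⟨p', hp0', hp'⟩⟩ := (Qle_iff hyq).1 h1
    obtain ⟨⟨l', hl'⟩, ⟨q', -, hq'⟩⟩ := (Qle_iff hvq).1 h2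
    have has : a ≤ s := ha.2 ⟨⟨k', hk'⟩, ⟨l', hl'⟩⟩
    obtain ⟨c, hc⟩ := sub_mem_multiples hyq hk hk' has
    obtain ⟨d, hd⟩ := sub_mem_multiples hvq hl hl' has
    obtain ⟨m, hm⟩ := common_multiple hy hv hb hc hd
    obtain ⟨n, hn⟩ := common_multiple hy hv hb hp' hq'
    refine (Qle_iff hbq).2 ⟨⟨m, by linarith⟩, ⟨n, Nat.pos_of_ne_zero ?_, hn⟩⟩
    rintro rfl
    have ht : 0 < t := by
      rw [hp']
      exact mul_pos hyq (by exact_mod_cast hp0')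
    simp [hn] at ht
end

section
/- In G = ℚ ⋊ ℚ₊*, there do not exist (x,y), (w,z) ∈ P = ℕ ⋊ ℕ₊* with (1/3, 1/2) = (x,y)(w,z)⁻¹. (Such a factorization would force 6x − 3w = 2 for nonnegative integers x, w, which is impossible.) -/
theorem stmt7 :
    ¬ ∃ a b : ℚ × ℚ, inP a ∧ inP b ∧ ((1/3 : ℚ), (1/2 : ℚ)) = Qmul a (Qinv b) := by
  rintro ⟨⟨x, y⟩, ⟨w, z⟩, ⟨⟨m, hm⟩, -⟩, ⟨⟨n, hn⟩, -⟩, h⟩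
  simp only [Qmul, Qinv, Prod.mk.injEq] at h hm hn
  obtain ⟨h1, h2⟩ := h
  -- The second coordinates give `y / z = 1 / 2`; substituted into the first, `x - w / 2 = 1 / 3`.
  have h3 : (1 / 3 : ℚ) = x - w * (1 / 2) := by
    rw [h2, h1]
    ring
  rw [hm, hn] at h3
  -- Clearing denominators leaves an integer equation that fails modulo 3.
  have h4 : (6 * m : ℚ) = 3 * n + 2 := by linarith
  have h5 : 6 * m = 3 * n + 2 := by exact_mod_cast h4
  omega
end

section
/- Let G be a group, P ⊆ G a submonoid, and (X, P, T) a right partial action of P on a set X. Then the canonical cocycle on the semidirect product groupoid is unperforated: for all m, n ∈ P and all x, y ∈ X, if (x, mn, y) ∈ 𝒢(X,P,T), then x ∈ U(m), (x, m, x·m) ∈ 𝒢(X,P,T), and (x·m, n, y) ∈ 𝒢(X,P,T). -/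
/-- A right partial action of the submonoid `P ⊆ G` on a set `X`.  The map `act g` is a
total function; it is only meaningful on `U g`, and only for `g ∈ P`. -/
structure RightPartialAction (G : Type*) [Group G] (P : Submonoid G) (X : Type*) where
  U : G → Set X
  act : G → X → X
  U_one : U 1 = Set.univ
  act_one : ∀ x, act 1 x = x
  mem_U_mul : ∀ p ∈ P, ∀ q ∈ P, ∀ x : X, x ∈ U (p * q) ↔ x ∈ U p ∧ act p x ∈ U q
  act_mul : ∀ p ∈ P, ∀ q ∈ P, ∀ x ∈ U (p * q), act (p * q) x = act q (act p x)

/-- Membership of the triple `(x, g, y)` in the semidirect product groupoid `𝒢(X,P,T)`. -/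
def memGpd {G : Type*} [Group G] {P : Submonoid G} {X : Type*}
    (A : RightPartialAction G P X) (x : X) (g : G) (y : X) : Prop :=
  ∃ m ∈ P, ∃ n ∈ P, g = m * n⁻¹ ∧ x ∈ A.U m ∧ y ∈ A.U n ∧ A.act m x = A.act n y

/-- The action is directed. -/
def IsDirectedAction {G : Type*} [Group G] {P : Submonoid G} {X : Type*}
    (A : RightPartialAction G P X) : Prop :=
  ∀ p ∈ P, ∀ q ∈ P, (A.U p ∩ A.U q).Nonempty →
    ∃ r, (∃ a ∈ P, r = p * a) ∧ (∃ b ∈ P, r = q * b) ∧ A.U p ∩ A.U q = A.U r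

/-- `r(𝒢(X,P,T)_g)`: the points of `X` that are the range of an element with cocycle
value `g`. -/
def gpdRange {G : Type*} [Group G] {P : Submonoid G} {X : Type*}
    (A : RightPartialAction G P X) (g : G) : Set X :=
  {x | ∃ y, memGpd A x g y}

theorem stmt9 {G : Type*} [Group G] {P : Submonoid G} {X : Type*}
    (A : RightPartialAction G P X) (m n : G) (hm : m ∈ P) (hn : n ∈ P)
    (x y : X) (h : memGpd A x (m * n) y) :
    x ∈ A.U m ∧ memGpd A x m (A.act m x) ∧ memGpd A (A.act m x) n y := by
  obtain ⟨a, ha, b, hb, hab, hxa, hyb, hact⟩ := h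
  -- The witnesses satisfy `m n = a b⁻¹`, so `a = m (n b)` factors through `m` inside `P`.
  have hnb : n * b ∈ P := P.mul_mem hn hb
  obtain rfl : a = m * (n * b) := by
    rw [← mul_assoc, hab, inv_mul_cancel_right]
  obtain ⟨hxm, hxnb⟩ := (A.mem_U_mul m hm (n * b) hnb x).1 hxa
  refine ⟨hxm, ⟨m, hm, 1, P.one_mem, by simp, hxm, by simp [A.U_one], (A.act_one _).symm⟩,
    ⟨n * b, hnb, b, hb, by simp, hxnb, hyb, ?_⟩⟩
  rw [← A.act_mul m hm (n * b) hnb x hxa, hact]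
end

section
/- Let G be a group, P ⊆ G a submonoid, and (X, P, T) a directed right partial action of P on a set X. Then for all p, q ∈ P, r(𝒢(X,P,T)_p) ∩ r(𝒢(X,P,T)_q) = ⋃_{r ∈ pP ∩ qP} r(𝒢(X,P,T)_r). -/
theorem gpdRange_eq_U {G : Type*} [Group G] {P : Submonoid G} {X : Type*}
    (A : RightPartialAction G P X) {p : G} (hp : p ∈ P) : gpdRange A p = A.U p := by
  ext x
  constructor
  · rintro ⟨y, m, -, n, hn, hpmn, hx, -, -⟩
    have hm : m = p * n := by rw [hpmn, inv_mul_cancel_right]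
    rw [hm] at hx
    exact ((A.mem_U_mul p hp n hn x).1 hx).1
  · intro hx
    exact ⟨A.act p x, p, hp, 1, P.one_mem, by simp, hx, by simp [A.U_one], (A.act_one _).symm⟩

theorem stmt11 {G : Type*} [Group G] {P : Submonoid G} {X : Type*}
    (A : RightPartialAction G P X) (hdir : IsDirectedAction A)
    (p q : G) (hp : p ∈ P) (hq : q ∈ P) :
    gpdRange A p ∩ gpdRange A q =
      ⋃ r ∈ {r : G | (∃ a ∈ P, r = p * a) ∧ ∃ b ∈ P, r = q * b}, gpdRange A r := by
  rw [gpdRange_eq_U A hp, gpdRange_eq_U A hq]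
  ext x
  simp only [Set.mem_iUnion, Set.mem_setOf_eq, exists_prop]
  constructor
  · intro hx
    obtain ⟨r, ⟨a, ha, hra⟩, hrb, hU⟩ := hdir p hp q hq ⟨x, hx⟩
    have hr : r ∈ P := hra ▸ P.mul_mem hp ha
    refine ⟨r, ⟨⟨a, ha, hra⟩, hrb⟩, ?_⟩
    rw [gpdRange_eq_U A hr, ← hU]
    exact hx
  · rintro ⟨r, ⟨⟨a, ha, hra⟩, b, hb, hrb⟩, hx⟩
    have hr : r ∈ P := hra ▸ P.mul_mem hp ha
    rw [gpdRange_eq_U A hr] at hx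
    exact ⟨((A.mem_U_mul p hp a ha x).1 (hra ▸ hx)).1,
      ((A.mem_U_mul q hq b hb x).1 (hrb ▸ hx)).1⟩
end

section
/- Let (G,P) be a quasi-lattice ordered group and (X, P, T) a directed right partial action of P on a set X. Then for all p, q ∈ P: if j ∈ P is a least common upper bound of p and q (with respect to the order g ≤ h iff g⁻¹h ∈ P), then r(𝒢(X,P,T)_p) ∩ r(𝒢(X,P,T)_q) = r(𝒢(X,P,T)_j); and if p and q have no common upper bound in P, then r(𝒢(X,P,T)_p) ∩ r(𝒢(X,P,T)_q) = ∅. -/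
theorem U_anti {G : Type*} [Group G] {P : Submonoid G} {X : Type*}
    (A : RightPartialAction G P X) {p r : G} (hp : p ∈ P) (h : qleP P p r) :
    A.U r ⊆ A.U p := by
  intro x hx
  have hr : r = p * (p⁻¹ * r) := by group
  rw [hr] at hx
  exact ((A.mem_U_mul p hp _ h x).1 hx).1

/-- Every point of `U p ∩ U q` lies in `U r` for some common upper bound `r` of `p` and `q`. -/
theorem exists_cub_of_mem {G : Type*} [Group G] {P : Submonoid G} {X : Type*}
    (A : RightPartialAction G P X) (hdir : IsDirectedAction A)
    {p q : G} (hp : p ∈ P) (hq : q ∈ P) {x : X} (hx : x ∈ A.U p ∩ A.U q) :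
    ∃ r ∈ P, qleP P p r ∧ qleP P q r ∧ x ∈ A.U r := by
  obtain ⟨r, ⟨a, ha, hra⟩, ⟨b, hb, hrb⟩, hU⟩ := hdir p hp q hq ⟨x, hx⟩
  refine ⟨r, hra ▸ P.mul_mem hp ha, ?_, ?_, hU ▸ hx⟩
  · simpa [qleP, hra] using ha
  · simpa [qleP, hrb] using hb

theorem stmt12 {G : Type*} [Group G] {P : Submonoid G} {X : Type*}
    (hQ : IsQLO P)
    (A : RightPartialAction G P X) (hdir : IsDirectedAction A)
    (p q : G) (hp : p ∈ P) (hq : q ∈ P) :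
    (∀ j, IsLCUB P p q j → gpdRange A p ∩ gpdRange A q = gpdRange A j) ∧
    (¬ HasCUB P p q → gpdRange A p ∩ gpdRange A q = (∅ : Set X)) := by
  rw [gpdRange_eq_U A hp, gpdRange_eq_U A hq]
  constructor
  · rintro j ⟨hj, hpj, hqj, hmin⟩
    rw [gpdRange_eq_U A hj]
    apply Set.Subset.antisymm
    · intro x hx
      obtain ⟨r, hr, hpr, hqr, hxr⟩ := exists_cub_of_mem A hdir hp hq hx
      exact U_anti A hj (hmin r hr hpr hqr) hxr
    · exact Set.subset_inter (U_anti A hp hpj) (U_anti A hq hqj)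
  · intro hno
    refine Set.eq_empty_of_forall_notMem fun x hx => hno ?_
    obtain ⟨r, hr, hpr, hqr, -⟩ := exists_cub_of_mem A hdir hp hq hx
    exact ⟨r, hr, hpr, hqr⟩
end

section
/- Let G be a group, P ⊆ G a submonoid, and (X, P, T) a directed right partial action of P on a set X. Then for every odd n ≥ 1 and all p, p₁, …, p_n ∈ P: if x ∈ r(𝒢(X,P,T)_p) and there exist triples (a_i, p_i, b_i) ∈ 𝒢(X,P,T) for i = 1, …, n with a₁ = x, b_{i} = b_{i+1} for all odd i < n, and a_i = a_{i+1} for all even i < n (so that the product (a₁,p₁,b₁)(a₂,p₂,b₂)⁻¹⋯(a_n,p_n,b_n) is defined and has range x), then there exists m ∈ pP ∩ (p₁p₂⁻¹⋯p_{n−1}⁻¹p_n)P with x ∈ r(𝒢(X,P,T)_m). -/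
section Groupoid

variable {G : Type*} [Group G] {P : Submonoid G} {X : Type*} {A : RightPartialAction G P X}

theorem memGpd_refl (x : X) : memGpd A x 1 x :=
  ⟨1, P.one_mem, 1, P.one_mem, by simp, by simp [A.U_one], by simp [A.U_one], rfl⟩

theorem memGpd_symm {x y : X} {g : G} (h : memGpd A x g y) : memGpd A y g⁻¹ x := by
  obtain ⟨m, hm, n, hn, rfl, hx, hy, e⟩ := h
  exact ⟨n, hn, m, hm, by group, hy, hx, e.symm⟩

theorem memGpd_trans (hdir : IsDirectedAction A) {x y z : X} {g h : G}
    (h₁ : memGpd A x g y) (h₂ : memGpd A y h z) : memGpd A x (g * h) z := by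
  obtain ⟨m, hm, n, hn, rfl, hx, hy, e⟩ := h₁
  obtain ⟨m', hm', n', hn', rfl, hy', hz, e'⟩ := h₂
  obtain ⟨r, ⟨c, hc, hrc⟩, ⟨d, hd, hrd⟩, hU⟩ := hdir n hn m' hm' ⟨y, hy, hy'⟩
  have hyr : y ∈ A.U r := hU ▸ ⟨hy, hy'⟩
  have hyc : y ∈ A.U (n * c) := hrc ▸ hyr
  have hyd : y ∈ A.U (m' * d) := hrd ▸ hyr
  have hxc : x ∈ A.U (m * c) :=
    (A.mem_U_mul m hm c hc x).2 ⟨hx, e ▸ ((A.mem_U_mul n hn c hc y).1 hyc).2⟩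
  have hzd : z ∈ A.U (n' * d) :=
    (A.mem_U_mul n' hn' d hd z).2 ⟨hz, e' ▸ ((A.mem_U_mul m' hm' d hd y).1 hyd).2⟩
  refine ⟨m * c, P.mul_mem hm hc, n' * d, P.mul_mem hn' hd, ?_, hxc, hzd, ?_⟩
  · have hcd : c = n⁻¹ * (m' * d) := by rw [← hrd, hrc]; group
    rw [hcd]; group
  · rw [A.act_mul m hm c hc x hxc, A.act_mul n' hn' d hd z hzd, e, ← e',
      ← A.act_mul n hn c hc y hyc, ← A.act_mul m' hm' d hd y hyd, ← hrc, ← hrd]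

theorem memGpd_prod (hdir : IsDirectedAction A) (n : ℕ) (g : Fin n → G) (v : ℕ → X)
    (h : ∀ i : Fin n, memGpd A (v i) (g i) (v (i + 1))) :
    memGpd A (v 0) (List.ofFn g).prod (v n) := by
  induction n generalizing v with
  | zero => simpa using memGpd_refl (A := A) (v 0)
  | succ n ih =>
    rw [List.ofFn_succ, List.prod_cons]
    refine memGpd_trans hdir (h 0) (ih (fun i => g i.succ) (fun i => v (i + 1)) fun i => ?_)
    simpa using h i.succ

end Groupoid

theorem stmt13 {G : Type*} [Group G] {P : Submonoid G} {X : Type*}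
    (A : RightPartialAction G P X) (hdir : IsDirectedAction A)
    (k : ℕ) (p : G) (hp : p ∈ P)
    (ps : Fin (2 * k + 1) → G) (hps : ∀ i, ps i ∈ P)
    (a b : Fin (2 * k + 1) → X) (x : X)
    (hx : x ∈ gpdRange A p)
    (htr : ∀ i, memGpd A (a i) (ps i) (b i))
    (ha0 : a ⟨0, by omega⟩ = x)
    (hb : ∀ (i : ℕ) (h : i + 1 < 2 * k + 1), i % 2 = 0 → b ⟨i, by omega⟩ = b ⟨i + 1, h⟩)
    (ha : ∀ (i : ℕ) (h : i + 1 < 2 * k + 1), i % 2 = 1 → a ⟨i, by omega⟩ = a ⟨i + 1, h⟩) :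
    ∃ m, (∃ h ∈ P, m = p * h) ∧ (∃ h ∈ P, m = altProd ps * h) ∧ x ∈ gpdRange A m := by
  -- The vertices of the path: even steps go from `a i` to `b i`, odd steps from `b i` to `a i`.
  let v : ℕ → X := fun i =>
    if h : i < 2 * k + 1 then (if i % 2 = 0 then a ⟨i, h⟩ else b ⟨i, h⟩)
    else b ⟨2 * k, by omega⟩
  have hv0 : v 0 = x := by simpa [v] using ha0
  have hpath : memGpd A (v 0) (altProd ps) (v (2 * k + 1)) := by
    refine memGpd_prod hdir _ _ v ?_
    rintro ⟨i, hi⟩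
    have ht := htr ⟨i, hi⟩
    by_cases hpar : i % 2 = 0
    · have e₁ : v i = a ⟨i, hi⟩ := by simp only [v, dif_pos hi, if_pos hpar]
      have e₂ : v (i + 1) = b ⟨i, hi⟩ := by
        by_cases hlt : i + 1 < 2 * k + 1
        · have hodd : ¬ (i + 1) % 2 = 0 := by omega
          simp only [v, dif_pos hlt, if_neg hodd]
          exact (hb i hlt hpar).symm
        · obtain rfl : i = 2 * k := by omega
          simp only [v, dif_neg hlt]
      simpa [e₁, e₂, hpar] using ht
    · have hlt : i + 1 < 2 * k + 1 := by omega
      have e₁ : v i = b ⟨i, hi⟩ := by simp only [v, dif_pos hi, if_neg hpar]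
      have e₂ : v (i + 1) = a ⟨i, hi⟩ := by
        have heven : (i + 1) % 2 = 0 := by omega
        simp only [v, dif_pos hlt, if_pos heven]
        exact (ha i hlt (by omega)).symm
      simp only [e₁, e₂, if_neg hpar]
      exact memGpd_symm ht
  rw [hv0] at hpath
  obtain ⟨m, hm, n, hn, hg, hxm, -, -⟩ := hpath
  obtain ⟨y, m', hm', n', hn', hp', hxm', -, -⟩ := hx
  obtain ⟨r, ⟨c, hc, hrc⟩, ⟨d, hd, hrd⟩, hU⟩ := hdir m hm m' hm' ⟨x, hxm, hxm'⟩
  have hxr : x ∈ A.U r := hU ▸ ⟨hxm, hxm'⟩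
  refine ⟨r, ⟨n' * d, P.mul_mem hn' hd, ?_⟩, ⟨n * c, P.mul_mem hn hc, ?_⟩,
    A.act r x, r, hrc ▸ P.mul_mem hm hc, 1, P.one_mem, by simp, hxr, by simp [A.U_one],
    (A.act_one _).symm⟩
  · rw [hp', hrd]; group
  · rw [hg, hrc]; group
end

section
/- Let (X, d, σ) be a k-dimensional shift system and G its path groupoid. Then the degree cocycle is unperforated: for all m, n ∈ ℕ^k and all x, y ∈ X, if (x, m + n, y) ∈ G (viewing m + n as an element of ℤ^k), then m ≤ d(x), (x, m, σ^m x) ∈ G, and (σ^m x, n, y) ∈ G. -/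
/-- A `k`-dimensional shift system: a set `X`, a degree map `d : X → (ℕ∪{∞})^k`, and
shift maps `σ^p` for `p ∈ ℕ^k`, defined (meaningful) on `{x : p ≤ d x}`. -/
structure ShiftSystem (k : ℕ) (X : Type*) where
  d : X → Fin k → ℕ∞
  shift : (Fin k → ℕ) → X → X
  shift_zero : ∀ x, shift 0 x = x
  le_d_shift : ∀ (p q : Fin k → ℕ) (x : X),
    (∀ i, ((p i + q i : ℕ) : ℕ∞) ≤ d x i) → ∀ i, (p i : ℕ∞) ≤ d (shift q x) i
  shift_shift : ∀ (p q : Fin k → ℕ) (x : X),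
    (∀ i, ((p i + q i : ℕ) : ℕ∞) ≤ d x i) → shift p (shift q x) = shift (p + q) x
  d_shift : ∀ (p : Fin k → ℕ) (x : X),
    (∀ i, (p i : ℕ∞) ≤ d x i) → ∀ i, d (shift p x) i = d x i - (p i : ℕ∞)

/-- Membership of the triple `(x, m, y)` in the path groupoid of a shift system. -/
def memPathGpd {k : ℕ} {X : Type*} (S : ShiftSystem k X)
    (x : X) (m : Fin k → ℤ) (y : X) : Prop :=
  ∃ p q : Fin k → ℕ, (∀ i, m i = (p i : ℤ) - (q i : ℤ)) ∧
    (∀ i, (p i : ℕ∞) ≤ S.d x i) ∧ (∀ i, (q i : ℕ∞) ≤ S.d y i) ∧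
    S.shift p x = S.shift q y

/-- `r(G_m)`: the points that are the range of a groupoid element with degree `m`. -/
def pathRange {k : ℕ} {X : Type*} (S : ShiftSystem k X) (m : Fin k → ℤ) : Set X :=
  {x | ∃ y, memPathGpd S x m y}

theorem stmt14 {k : ℕ} {X : Type*} (S : ShiftSystem k X)
    (m n : Fin k → ℕ) (x y : X)
    (h : memPathGpd S x (fun i => ((m i + n i : ℕ) : ℤ)) y) :
    (∀ i, (m i : ℕ∞) ≤ S.d x i) ∧
    memPathGpd S x (fun i => (m i : ℤ)) (S.shift m x) ∧
    memPathGpd S (S.shift m x) (fun i => (n i : ℤ)) y := by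
  obtain ⟨p, q, hpq, hp, hq, he⟩ := h
  -- The degree condition forces `p = (n + q) + m`, so `σ^p x = σ^{n+q} (σ^m x)`.
  obtain rfl : p = (n + q) + m := by
    funext i
    have : ((m i + n i : ℕ) : ℤ) = p i - q i := hpq i
    simp only [Pi.add_apply]
    omega
  have hm : ∀ i, (m i : ℕ∞) ≤ S.d x i := fun i =>
    le_trans (by exact_mod_cast Nat.le_add_left _ _) (hp i)
  refine ⟨hm, ⟨m, 0, by simp, hm, by simp, (S.shift_zero _).symm⟩,
    n + q, q, by simp, S.le_d_shift (n + q) m x hp, hq, ?_⟩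
  rw [S.shift_shift (n + q) m x hp, he]
end

section
/- Let (X, d, σ) be a k-dimensional shift system and G its path groupoid. For m ∈ ℤ^k set r(G_m) = {x ∈ X : there exists y with (x, m, y) ∈ G}. Then for all m, n ∈ ℕ^k, r(G_m) ∩ r(G_n) = r(G_{m∨n}), where m ∨ n denotes the coordinatewise maximum of m and n. -/
theorem mem_pathRange_natCast_iff {k : ℕ} {X : Type*} (S : ShiftSystem k X) (m : Fin k → ℕ)
    (x : X) : x ∈ pathRange S (fun i => (m i : ℤ)) ↔ ∀ i, (m i : ℕ∞) ≤ S.d x i := by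
  constructor
  · rintro ⟨y, p, q, hm, hp, -, -⟩ i
    have hle : m i ≤ p i := by
      have : (m i : ℤ) = (p i : ℤ) - (q i : ℤ) := hm i
      omega
    exact (Nat.cast_le.mpr hle).trans (hp i)
  · intro h
    exact ⟨S.shift m x, m, 0, by simp, h, by simp, (S.shift_zero _).symm⟩

theorem stmt15 {k : ℕ} {X : Type*} (S : ShiftSystem k X) (m n : Fin k → ℕ) :
    pathRange S (fun i => (m i : ℤ)) ∩ pathRange S (fun i => (n i : ℤ)) =
      pathRange S (fun i => ((max (m i) (n i) : ℕ) : ℤ)) := by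
  ext x
  rw [Set.mem_inter_iff, mem_pathRange_natCast_iff, mem_pathRange_natCast_iff,
    mem_pathRange_natCast_iff S (fun i => max (m i) (n i)), ← forall_and]
  refine forall_congr' fun i => ?_
  rw [Nat.mono_cast.map_max, max_le_iff]
end
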